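/- Let 𝔤 be a finite-dimensional real (or complex) Lie algebra and D a derivation of 𝔤 such that 𝔤 decomposes as the direct sum of the eigenspaces of D for the eigenvalues -1, 0, and 1. Then there exists a Levi complement (a semisimple subalgebra 𝔰 with 𝔤 = rad(𝔤) ⊕ 𝔰 as vector spaces) of 𝔤 that is invariant under D. -/

import Mathlib

/-!
Derivations preserve the radical in characteristic zero, so `D` induces a derivation `E` of the
semisimple quotient, and we look for a `D`-invariant subalgebra which the projection `π : 𝔤 → 𝔤 /
rad 𝔤` maps isomorphically onto the quotient. Descending along the derived series of the radical,
one may assume that `ker π` is abelian. Whitehead's second lemma then provides a Lie homomorphism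
`τ` with `π ∘ τ = id`, and `τ - u` has the same property for every `1`-cocycle `u` with values in
`ker π`. The operator `T u = D ∘ u - u ∘ E` is semisimple because `D` is, it preserves the space `Z`
of cocycles, and it sends `τ` into `Z`. Splitting `τ` along a `T`-invariant complement of `Z` yields
`u ∈ Z` with `T (τ - u) = 0`: the range of `τ - u` is `D`-invariant.
-/

namespace LeviDecomposition

open LieModule LieModule.Cohomology TensorProduct

section Contraction

variable {R L M : Type*} [CommRing R] [LieRing L] [LieAlgebra R L]
  [AddCommGroup M] [Module R M] [LieRingModule L M] [LieModule R L M]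

/-- The linear extension to `L ⊗ L` of `a ⊗ b ↦ (n ↦ ⁅a, φ b n⁆)`. For `φ = toEnd R L M` it is the
action of `L ⊗ L` on `M` through the universal enveloping algebra, and for a `2`-cochain `φ` it is
the contraction of `φ` to a `1`-cochain. -/
def lieContract {N : Type*} [AddCommGroup N] [Module R N] (φ : L →ₗ[R] N →ₗ[R] M) :
    L ⊗[R] L →ₗ[R] N →ₗ[R] M :=
  TensorProduct.lift ((LinearMap.llcomp R N M M).compl₁₂ (toEnd R L M : L →ₗ[R] Module.End R M) φ)

@[simp]
lemma lieContract_tmul {N : Type*} [AddCommGroup N] [Module R N] (φ : L →ₗ[R] N →ₗ[R] M)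
    (a b : L) (n : N) : lieContract φ (a ⊗ₜ b) n = ⁅a, φ b n⁆ :=
  rfl

variable (M) in
/-- The action of a tensor `t ∈ L ⊗ L` on an `L`-module, `a ⊗ b` acting by `m ↦ ⁅a, ⁅b, m⁆⁆`. -/
abbrev tensorAction (t : L ⊗[R] L) : Module.End R M :=
  lieContract (toEnd R L M : L →ₗ[R] Module.End R M) t

lemma lie_tensorAction (t : L ⊗[R] L) (x : L) (m : M) :
    ⁅x, tensorAction M t m⁆ = tensorAction M ⁅x, t⁆ m + tensorAction M t ⁅x, m⁆ := by
  induction t with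
  | zero => simp
  | add t u ht hu =>
    simp only [map_add, LinearMap.add_apply, lie_add, ht, hu]
    abel
  | tmul a b =>
    simp only [TensorProduct.LieModule.lie_tmul_right, map_add, LinearMap.add_apply,
      lieContract_tmul, LieHom.coe_toLinearMap, toEnd_apply_apply]
    rw [leibniz_lie x a, leibniz_lie x b, lie_add, add_assoc]

/-- The action of an invariant tensor, as an endomorphism of the `L`-module `M`. -/
def tensorActionHom {t : L ⊗[R] L} (ht : ∀ x : L, ⁅x, t⁆ = 0) : M →ₗ⁅R,L⁆ M where
  __ := tensorAction M t
  map_lie' {x m} := by simpa [ht] using! (lie_tensorAction t x m).symm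

/-- Up to the failure of `t` to be invariant, contraction with `t` is a homotopy between the action
of `t` on `2`-cocycles and zero. -/
lemma d₁₂_lieContract {c : twoCochain R L M} (hc : c ∈ twoCocycle R L M) (t : L ⊗[R] L) (x y : L) :
    d₁₂ R L M (lieContract c.val t) x y =
      tensorAction M t (c x y) + lieContract c.val ⁅x, t⁆ y - lieContract c.val ⁅y, t⁆ x := by
  simp only [d₁₂_apply_apply]
  induction t with
  | zero => simp
  | add t u ht hu =>
    simp only [map_add, LinearMap.add_apply, lie_add]
    linear_combination (norm := abel) ht + hu
  | tmul a b =>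
    have cocycle : ⁅x, c y b⁆ - ⁅y, c x b⁆ + ⁅b, c x y⁆ - c ⁅x, y⁆ b + c ⁅x, b⁆ y
        - c ⁅y, b⁆ x = 0 := congr($((mem_twoCocycle_iff R L M c).mp hc) x y b)
    have contracted := congr(⁅a, $cocycle⁆)
    simp only [← twoCochain_skew c b, lie_add, lie_sub, lie_neg, lie_zero] at contracted
    simp only [TensorProduct.LieModule.lie_tmul_right, map_add,
      LinearMap.add_apply, lieContract_tmul, twoCochain_val_apply, LieHom.coe_toLinearMap,
      toEnd_apply_apply, leibniz_lie x a, leibniz_lie y a]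
    linear_combination (norm := abel) -contracted

end Contraction

section Casimir

variable {K L V : Type*} [Field K] [LieRing L] [LieAlgebra K L]
  [AddCommGroup V] [Module K V] [LieRingModule L V] [LieModule K L V]

lemma lie_sum_tmul_dualBasis {ι : Type*} [Fintype ι] [DecidableEq ι] {B : LinearMap.BilinForm K V}
    (hB : B.Nondegenerate) (symm : B.IsSymm) (hinv : B.lieInvariant L) (b : Module.Basis ι K V)
    (x : L) : ⁅x, ∑ i, b i ⊗ₜ[K] B.dualBasis hB b i⁆ = 0 := by
  set b' := B.dualBasis hB b
  have expand (v : V) : ∑ j, B v (b' j) • b j = v := by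
    simpa only [b', ← LinearMap.BilinForm.dualBasis_repr_apply hB,
      LinearMap.BilinForm.dualBasis_dualBasis hB symm] using b.sum_repr v
  have expand' (v : V) : ∑ j, B v (b j) • b' j = v := by
    simpa only [b', LinearMap.BilinForm.dualBasis_repr_apply] using b'.sum_repr v
  have left (i : ι) : ⁅x, b i⁆ ⊗ₜ[K] b' i = ∑ j, B ⁅x, b i⁆ (b' j) • b j ⊗ₜ b' i := by
    simp_rw [smul_tmul', ← sum_tmul, expand]
  have right (i : ι) : b i ⊗ₜ[K] ⁅x, b' i⁆ = ∑ j, -(B ⁅x, b j⁆ (b' i) • b i ⊗ₜ b' j) := by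
    simp_rw [hinv x, neg_smul, neg_neg, ← tmul_smul, ← tmul_sum, ← symm.eq ⁅x, b' i⁆,
      expand']
  simp_rw [lie_sum, TensorProduct.LieModule.lie_tmul_right, Finset.sum_add_distrib, left, right]
  rw [Finset.sum_comm]
  simp

variable {M : Type*} [AddCommGroup M] [Module K M] [LieRingModule L M] [LieModule K L M]

lemma trace_tensorAction_tmul (a b : L) :
    LinearMap.trace K M (tensorAction M (a ⊗ₜ[K] b)) = traceForm K L M a b :=
  rfl

lemma exists_invariant_tensor_trace_ne_zero [CharZero K] [FiniteDimensional K L]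
    [LieAlgebra.IsKilling K L] (hM : traceForm K L M ≠ 0) :
    ∃ t : L ⊗[K] L, (∀ x : L, ⁅x, t⁆ = 0) ∧ LinearMap.trace K M (tensorAction M t) ≠ 0 := by
  let I : LieIdeal K L :=
    LieAlgebra.InvariantForm.orthogonal (traceForm K L M) (traceForm_lieInvariant K L M) ⊤
  have hI : I.toSubmodule = LinearMap.ker (traceForm K L M) := by
    ext y
    simp [I, LinearMap.BilinForm.mem_orthogonal_iff, LinearMap.ext_iff, traceForm_comm K L M y]
  let J : LieIdeal K L := I.killingCompl
  let B : LinearMap.BilinForm K J := (traceForm K L M).restrict J.toSubmodule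
  have compl : IsCompl J.toSubmodule (LinearMap.ker (traceForm K L M)) :=
    hI ▸ LieSubmodule.isCompl_toSubmodule.mpr I.isCompl_killingCompl.symm
  have nondeg : B.Nondegenerate :=
    (traceForm_isSymm K L M).nondegenerate_restrict_of_isCompl_ker compl
  have symm : B.IsSymm := ⟨fun _ _ ↦ traceForm_comm K L M _ _⟩
  have inv : B.lieInvariant L := fun _ _ _ ↦ traceForm_lieInvariant K L M _ _ _
  let b := Module.finBasis K J
  refine ⟨TensorProduct.LieModule.mapIncl J J (∑ i, b i ⊗ₜ B.dualBasis nondeg b i), fun x ↦ ?_, ?_⟩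
  · rw [← LieModuleHom.map_lie, lie_sum_tmul_dualBasis nondeg symm inv, map_zero]
  · have trace_eq (i) : traceForm K L M (b i) (B.dualBasis nondeg b i) = 1 := by
      simpa using! LinearMap.BilinForm.apply_dualBasis_right nondeg symm b i i
    have : Nontrivial J := by
      refine J.toSubmodule.nontrivial_iff_ne_bot.mpr fun hJ ↦ hM (LinearMap.ker_eq_top.mp ?_)
      exact eq_top_of_bot_isCompl (hJ ▸ compl)
    simp [TensorProduct.LieModule.mapIncl_def, trace_tensorAction_tmul, trace_eq,
      Module.finrank_pos.ne']

end Casimir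

section Cochains

variable {R L M N : Type*} [CommRing R] [LieRing L] [LieAlgebra R L]
  [AddCommGroup M] [Module R M] [LieRingModule L M] [AddCommGroup N] [Module R N]
  [LieRingModule L N]

/-- Postcomposition of a `2`-cochain with a homomorphism of coefficient modules. -/
def mapCochain (g : M →ₗ⁅R,L⁆ N) : twoCochain R L M →ₗ[R] twoCochain R L N :=
  LinearMap.restrict (LinearMap.llcomp R L (L →ₗ[R] M) (L →ₗ[R] N) (LinearMap.llcomp R L M N g))
    fun c hc x ↦ by simp_all

@[simp]
lemma mapCochain_apply_apply (g : M →ₗ⁅R,L⁆ N) (c : twoCochain R L M) (x y : L) :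
    mapCochain g c x y = g (c x y) :=
  rfl

lemma exists_mapCochain_incl_eq (P : LieSubmodule R L M) {c : twoCochain R L M}
    (hc : ∀ x y, c x y ∈ P) : ∃ c' : twoCochain R L P, mapCochain P.incl c' = c :=
  ⟨⟨LinearMap.mk₂ R (fun x y ↦ ⟨c x y, hc x y⟩) (fun _ _ _ ↦ by simp) (fun _ _ _ ↦ by simp)
    (fun _ _ _ ↦ by simp) fun _ _ _ ↦ by simp, fun x ↦ by simp⟩, rfl⟩

variable [LieModule R L M] [LieModule R L N]

lemma d₁₂_comp (g : M →ₗ⁅R,L⁆ N) (f : oneCochain R L M) :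
    d₁₂ R L N (g.toLinearMap ∘ₗ f) = mapCochain g (d₁₂ R L M f) := by
  ext x y
  simp

lemma d₂₃_mapCochain (g : M →ₗ⁅R,L⁆ N) (c : twoCochain R L M) (x y z : L) :
    d₂₃ R L N (mapCochain g c) x y z = g (d₂₃ R L M c x y z) := by
  simp

lemma mapCochain_mem_twoCocycle (g : M →ₗ⁅R,L⁆ N) {c : twoCochain R L M}
    (hc : c ∈ twoCocycle R L M) : mapCochain g c ∈ twoCocycle R L N := by
  rw [mem_twoCocycle_iff] at hc ⊢
  ext x y z
  simp only [d₂₃_mapCochain, hc, LinearMap.zero_apply, map_zero]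

lemma mem_twoCocycle_of_mapCochain {g : M →ₗ⁅R,L⁆ N} (hg : Function.Injective g)
    {c : twoCochain R L M} (hc : mapCochain g c ∈ twoCocycle R L N) : c ∈ twoCocycle R L M := by
  rw [mem_twoCocycle_iff] at hc ⊢
  ext x y z
  apply hg
  simp only [← d₂₃_mapCochain, hc, LinearMap.zero_apply, map_zero]

lemma twoCocycle_le_range_of_lieSubmodule [Module.Projective R L] (N : LieSubmodule R L M)
    (hN : twoCocycle R L N ≤ LinearMap.range (d₁₂ R L N))
    (hQ : twoCocycle R L (M ⧸ N) ≤ LinearMap.range (d₁₂ R L (M ⧸ N))) :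
    twoCocycle R L M ≤ LinearMap.range (d₁₂ R L M) := by
  intro c hc
  let π := LieSubmodule.Quotient.mk' N
  obtain ⟨q, hq⟩ := hQ (mapCochain_mem_twoCocycle π hc)
  obtain ⟨f, rfl⟩ := Module.projective_lifting_property π.toLinearMap q
    (LieSubmodule.Quotient.surjective_mk' N)
  have mem_N (x y : L) : (c + d₁₂ R L M (-f)) x y ∈ N := by
    have : mapCochain π (c + d₁₂ R L M (-f)) = 0 := by
      rw [map_add, ← d₁₂_comp, ← hq, ← map_add, LinearMap.comp_neg, add_neg_cancel, map_zero]
    exact (LieSubmodule.Quotient.mk_eq_zero (N := N)).mp congr($this x y)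
  obtain ⟨c', hc'⟩ := exists_mapCochain_incl_eq N mem_N
  have cocycle : c' ∈ twoCocycle R L N := mem_twoCocycle_of_mapCochain N.injective_incl <|
    hc' ▸ add_mem hc congr($(d₂₃_comp_d₁₂ R L M) (-f))
  obtain ⟨f', rfl⟩ := hN cocycle
  refine ⟨f + N.incl.toLinearMap ∘ₗ f', ?_⟩
  rw [map_add, d₁₂_comp, hc', add_left_comm, ← map_add, add_neg_cancel, map_zero, add_zero]

lemma twoCocycle_le_range_of_bijective_tensorAction {t : L ⊗[R] L} (inv : ∀ x : L, ⁅x, t⁆ = 0)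
    (bij : Function.Bijective (tensorAction M t)) :
    twoCocycle R L M ≤ LinearMap.range (d₁₂ R L M) := by
  intro c hc
  let C : M ≃ₗ⁅R,L⁆ M :=
    { LinearEquiv.ofBijective (tensorAction M t) bij with
      map_lie' := (tensorActionHom inv).map_lie' }
  have contracted : d₁₂ R L M (lieContract c.val t) = mapCochain C.toLieModuleHom c := by
    ext x y
    simpa [inv] using! d₁₂_lieContract hc t x y
  refine ⟨C.symm.toLieModuleHom.toLinearMap ∘ₗ lieContract c.val t, ?_⟩
  rw [d₁₂_comp, contracted]
  ext x y
  exact C.symm_apply_apply _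

end Cochains

section Whitehead

variable {K L : Type*} [Field K] [LieRing L] [LieAlgebra K L] [FiniteDimensional K L]
  [LieAlgebra.IsKilling K L]

variable (K L) in
lemma derivedSeries_one_eq_top : LieAlgebra.derivedSeries K L 1 = ⊤ := by
  have compl := (LieAlgebra.derivedSeries K L 1).isCompl_killingCompl
  have : IsLieAbelian (LieAlgebra.derivedSeries K L 1).killingCompl := by
    rw [LieAlgebra.abelian_iff_derived_one_eq_bot, eq_bot_iff, ← compl.inf_eq_bot]
    exact le_inf (LieAlgebra.derivedSeriesOfIdeal_mono le_top 1)
      (LieAlgebra.derivedSeriesOfIdeal_le_self _ 1)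
  rw [LieAlgebra.IsKilling.ideal_eq_bot_of_isLieAbelian (LieIdeal.killingCompl K L _)] at compl
  exact eq_top_of_isCompl_bot compl

/-- The cocycle `β` is `κ(D ·, ·)` for a derivation `D`, and derivations of `L` are inner. -/
lemma exists_eq_apply_lie (β : LinearMap.BilinForm K L)
    (cocycle : ∀ x y z, β x ⁅y, z⁆ = β ⁅x, y⁆ z + β y ⁅x, z⁆) :
    ∃ ξ : Module.Dual K L, ∀ x y, β x y = ξ ⁅x, y⁆ := by
  have nondeg := LieAlgebra.IsKilling.killingForm_nondegenerate K L
  let δ : L →ₗ[K] L := ((killingForm K L).toDual nondeg).symm ∘ₗ β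
  have killing_δ (x y : L) : killingForm K L (δ x) y = β x y :=
    LinearMap.BilinForm.apply_toDual_symm_apply (hB := nondeg) (β x) y
  have invariant (x y z : L) : killingForm K L ⁅x, y⁆ z = killingForm K L x ⁅y, z⁆ :=
    traceForm_apply_lie_apply K L L x y z
  let D : LieDerivation K L L :=
    { δ with
      leibniz' x y := by
        refine sub_eq_zero.mp (nondeg.1 _ fun z ↦ ?_)
        change killingForm K L (δ ⁅x, y⁆ - (⁅x, δ y⁆ - ⁅y, δ x⁆)) z = 0
        rw [← lie_skew x (δ y), ← lie_skew y (δ x)]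
        simp only [map_sub, map_neg, LinearMap.sub_apply, LinearMap.neg_apply, invariant, killing_δ,
          cocycle x y z]
        abel }
  obtain ⟨u, hu⟩ := LieDerivation.IsKilling.exists_eq_ad D
  refine ⟨killingForm K L u, fun x y ↦ ?_⟩
  rw [← killing_δ, ← invariant, ← LieDerivation.ad_apply_apply K L, hu]
  rfl

variable {M : Type*} [AddCommGroup M] [Module K M] [LieRingModule L M] [LieModule K L M]
  [FiniteDimensional K M]

lemma twoCocycle_le_range_of_isTrivial [IsTrivial L M] :
    twoCocycle K L M ≤ LinearMap.range (d₁₂ K L M) := by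
  intro c hc
  rw [mem_twoCocycle_iff_of_trivial] at hc
  let b := Module.finBasis K M
  have coord_eq (i) : ∃ ξ : Module.Dual K L, ∀ x y, b.coord i (c x y) = ξ ⁅x, y⁆ :=
    exists_eq_apply_lie (c.val.compr₂ (b.coord i)) fun x y z ↦ by simp [hc x y z]
  choose ξ hξ using coord_eq
  refine ⟨-∑ i, (ξ i).smulRight (b i), ?_⟩
  ext x y
  simp [← hξ, b.sum_repr, trivial_lie_zero]

variable [CharZero K]

variable (K L M) in
lemma isTrivial_of_isIrreducible_of_traceForm_eq_zero [IsIrreducible K L M]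
    (hM : traceForm K L M = 0) : IsTrivial L M := by
  have := isNilpotent_derivedSeries_of_traceForm_eq_zero hM
  have : IsNilpotent L M := by
    rw [isNilpotent_iff_forall' (R := K)] at this ⊢
    exact fun x ↦ this ⟨x, derivedSeries_one_eq_top K L ▸ LieSubmodule.mem_top x⟩
  have : Nontrivial M := (LieSubmodule.nontrivial_iff K L M).mp inferInstance
  have := nontrivial_max_triv_of_isNilpotent K L M
  exact (isTrivial_iff_max_triv_eq_top K L M).mpr (LieSubmodule.eq_top_of_isIrreducible K L M _)

lemma twoCocycle_le_range_of_isIrreducible [IsIrreducible K L M] :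
    twoCocycle K L M ≤ LinearMap.range (d₁₂ K L M) := by
  by_cases hM : traceForm K L M = 0
  · have := isTrivial_of_isIrreducible_of_traceForm_eq_zero K L M hM
    exact twoCocycle_le_range_of_isTrivial
  obtain ⟨t, inv, trace_ne⟩ := exists_invariant_tensor_trace_ne_zero hM
  let C : M →ₗ⁅K,L⁆ M := tensorActionHom inv
  have ker_eq_bot : C.ker = ⊥ := by
    refine (eq_bot_or_eq_top _).resolve_right fun h ↦ trace_ne ?_
    rw [show tensorAction M t = 0 from LinearMap.ext fun m ↦ C.mem_ker.mp (h ▸ trivial), map_zero]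
  have inj : Function.Injective (tensorAction M t) := C.ker_eq_bot.mp ker_eq_bot
  exact twoCocycle_le_range_of_bijective_tensorAction inv
    ⟨inj, LinearMap.surjective_of_injective inj⟩

end Whitehead

/-- Whitehead's second lemma, `H²(L, M) = 0`. -/
theorem twoCocycle_le_range_d₁₂ (K L : Type*) [Field K] [CharZero K] [LieRing L] [LieAlgebra K L]
    [FiniteDimensional K L] [LieAlgebra.IsKilling K L] (M : Type*) [AddCommGroup M] [Module K M]
    [LieRingModule L M] [LieModule K L M] [FiniteDimensional K M] :
    twoCocycle K L M ≤ LinearMap.range (d₁₂ K L M) := by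
  induction hn : Module.finrank K M using Nat.strong_induction_on generalizing M with
  | _ n ih =>
    rcases subsingleton_or_nontrivial M with _ | _
    · exact fun c _ ↦ ⟨0, by ext; exact Subsingleton.elim _ _⟩
    by_cases irr : ∀ N : LieSubmodule K L M, N ≠ ⊥ → N = ⊤
    · have := IsIrreducible.mk irr
      exact twoCocycle_le_range_of_isIrreducible
    push Not at irr
    obtain ⟨N, ne_bot, ne_top⟩ := irr
    subst hn
    refine twoCocycle_le_range_of_lieSubmodule N (ih _ ?_ N rfl) (ih _ ?_ (M ⧸ N) rfl)
    · exact Submodule.finrank_lt (by simpa)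
    · have : Nontrivial N := (LieSubmodule.nontrivial_iff_ne_bot K L M).mpr ne_bot
      exact (Nat.lt_add_of_pos_right Module.finrank_pos).trans_eq
        N.toSubmodule.finrank_quotient_add_finrank

section AbelianExtension

lemma lie_eq_zero_of_mem_ker {R L S : Type*} [CommRing R] [LieRing L] [LieAlgebra R L] [LieRing S]
    [LieAlgebra R S] {π : L →ₗ⁅R⁆ S} [IsLieAbelian π.ker] {a b : L} (ha : a ∈ π.ker)
    (hb : b ∈ π.ker) : ⁅a, b⁆ = 0 :=
  congr($(trivial_lie_zero π.ker π.ker ⟨a, ha⟩ ⟨b, hb⟩).val)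

variable {K L S : Type*} [Field K] [CharZero K] [LieRing L] [LieAlgebra K L]
  [FiniteDimensional K L] [LieRing S] [LieAlgebra K S] [FiniteDimensional K S]
  [LieAlgebra.IsKilling K S]

lemma exists_lieHom_rightInverse_of_isLieAbelian_ker {π : L →ₗ⁅K⁆ S} (hπ : Function.Surjective π)
    [IsLieAbelian π.ker] : ∃ τ : S →ₗ⁅K⁆ L, Function.RightInverse τ π := by
  let E := (LieAlgebra.isExtension_of_surjective π hπ).extension
  let := E.ringModuleOf
  have := E.lieModuleOf
  obtain ⟨σ, hσ⟩ := (π : L →ₗ[K] S).exists_rightInverse_of_surjective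
    (LinearMap.range_eq_top.mpr hπ)
  have hs : Function.LeftInverse E.proj σ := fun s ↦ congr($hσ s)
  obtain ⟨f, hf⟩ := twoCocycle_le_range_d₁₂ K S π.ker (E.twoCocycleOf hs).2
  have coe_toKer_symm (z : E.proj.ker) : ((E.toKer.symm z : π.ker) : L) = z.val :=
    congr($(E.toKer.apply_symm_apply z).val)
  have coe_lie (x : S) (m : π.ker) : ((⁅x, m⁆ : π.ker) : L) = ⁅σ x, (m : L)⁆ := by
    have := E.ringModuleOf_bracket_proj m (σ x)
    rw [hs x] at this
    rw [this, coe_toKer_symm]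
    rfl
  have splits (x y : S) :
      ⁅σ x, (f y : L)⁆ - ⁅σ y, (f x : L)⁆ - f ⁅x, y⁆ = ⁅σ x, σ y⁆ - σ ⁅x, y⁆ := by
    have := congr((($hf x y : π.ker) : L))
    rw [d₁₂_apply_apply, AddSubgroupClass.coe_sub, AddSubgroupClass.coe_sub, coe_lie, coe_lie]
      at this
    rw [this]
    exact coe_toKer_symm _
  refine ⟨{ σ - (π.ker.incl : π.ker →ₗ[K] L) ∘ₗ f with map_lie' {x y} := ?_ }, fun s ↦ ?_⟩
  · change σ ⁅x, y⁆ - f ⁅x, y⁆ = ⁅σ x - f x, σ y - f y⁆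
    rw [sub_lie, lie_sub, lie_sub, lie_eq_zero_of_mem_ker (f x).2 (f y).2,
      ← lie_skew (f x : L) (σ y)]
    linear_combination (norm := abel) splits x y
  · change π (σ s - f s) = s
    rw [map_sub, LieHom.mem_ker.mp (f s).2, sub_zero]
    exact hs s

end AbelianExtension

section Semisimple

lemma isSemisimple_of_surjective {R M N : Type*} [CommRing R] [AddCommGroup M] [Module R M]
    [AddCommGroup N] [Module R N] {A : Module.End R M} {B : Module.End R N} {p : M →ₗ[R] N}
    (hp : Function.Surjective p) (hAB : ∀ m, p (A m) = B (p m)) (hA : A.IsSemisimple) :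
    B.IsSemisimple :=
  have : IsSemisimpleModule _ _ := hA
  let q : Module.AEval' A →ₗ[Polynomial R] Module.AEval' B :=
    LinearMap.ofAEval A ((Module.AEval'.of B).toLinearMap ∘ₗ p) fun m ↦ by
      simpa [Module.AEval'.X_smul_of] using hAB m
  IsSemisimpleModule.of_surjective q
    ((Module.AEval'.of B).surjective.comp (hp.comp (Module.AEval'.of A).symm.surjective))

lemma exists_mem_apply_sub_eq_zero {R V : Type*} [CommRing R] [AddCommGroup V] [Module R V]
    {T : Module.End R V} (hT : T.IsSemisimple) {Z : Submodule R V} (hZ : Z ∈ T.invtSubmodule)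
    {v : V} (hv : T v ∈ Z) : ∃ u ∈ Z, T (v - u) = 0 := by
  obtain ⟨W, hW, compl⟩ := Module.End.isSemisimple_iff.mp hT Z hZ
  obtain ⟨u, hu, w, hw, rfl⟩ := Submodule.mem_sup.mp (compl.sup_eq_top ▸ Submodule.mem_top (x := v))
  refine ⟨u, hu, ?_⟩
  rw [add_sub_cancel_left]
  refine Submodule.disjoint_def.mp compl.disjoint _ ?_ (hW hw)
  simpa using Z.sub_mem hv (hZ hu)

/-- The endomorphism `u ↦ B ∘ u - u ∘ A` of `Hom(V, W)`, which vanishes at `u` when `u` intertwines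
`A` and `B`. -/
def intertwiningDefect {R V W : Type*} [CommRing R] [AddCommGroup V] [Module R V] [AddCommGroup W]
    [Module R W] (A : Module.End R V) (B : Module.End R W) : Module.End R (V →ₗ[R] W) :=
  LinearMap.llcomp R V W W B - (LinearMap.llcomp R V V W).flip A

variable {K V W : Type*} [Field K] [AddCommGroup V] [Module K V] [FiniteDimensional K V]
  [AddCommGroup W] [Module K W]

lemma isSemisimple_map_of_map_pow (φ : Module.End K V →ₗ[K] Module.End K W) {A : Module.End K V}
    (hφ : ∀ n, φ (A ^ n) = φ A ^ n) (hA : A.IsSemisimple) : (φ A).IsSemisimple := by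
  refine Module.End.isSemisimple_of_squarefree_aeval_eq_zero hA.minpoly_squarefree ?_
  have := congr(φ $(minpoly.aeval K A))
  simpa [Polynomial.aeval_eq_sum_range, hφ] using this

lemma isSemisimple_intertwiningDefect [PerfectField K] [FiniteDimensional K W]
    {A : Module.End K V} {B : Module.End K W} (hA : A.IsSemisimple) (hB : B.IsSemisimple) :
    (intertwiningDefect A B).IsSemisimple := by
  let postcomp : Module.End K W →ₗ[K] Module.End K (V →ₗ[K] W) := LinearMap.llcomp K V W W
  let precomp : Module.End K V →ₗ[K] Module.End K (V →ₗ[K] W) := (LinearMap.llcomp K V V W).flip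
  have postcomp_pow (n : ℕ) : postcomp (B ^ n) = postcomp B ^ n := by
    induction n with
    | zero => rfl
    | succ n ih => rw [pow_succ', pow_succ', ← ih]; rfl
  have precomp_pow (n : ℕ) : precomp (A ^ n) = precomp A ^ n := by
    induction n with
    | zero => rfl
    | succ n ih => rw [pow_succ, pow_succ', ← ih]; rfl
  exact Module.End.IsSemisimple.sub_of_commute rfl
    (isSemisimple_map_of_map_pow postcomp postcomp_pow hB)
    (isSemisimple_map_of_map_pow precomp precomp_pow hA)

end Semisimple

section CrossedHoms

variable {K L S : Type*} [CommRing K] [LieRing L] [LieAlgebra K L] [LieRing S] [LieAlgebra K S]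

/-- The `1`-cocycles on `S` with values in the kernel of `π : L → S`, on which `S` acts through a
homomorphism `τ : S → L`. -/
def kerOneCocycle (π : L →ₗ⁅K⁆ S) (τ : S →ₗ⁅K⁆ L) : Submodule K (S →ₗ[K] L) where
  carrier := {u | (∀ x, u x ∈ π.ker) ∧ ∀ x y, u ⁅x, y⁆ = ⁅u x, τ y⁆ + ⁅τ x, u y⁆}
  zero_mem' := by simp
  add_mem' {u v} hu hv := by
    refine ⟨fun x ↦ add_mem (hu.1 x) (hv.1 x), fun x y ↦ ?_⟩
    simp only [LinearMap.add_apply, hu.2, hv.2, add_lie, lie_add]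
    abel
  smul_mem' a u hu :=
    ⟨fun x ↦ π.ker.smul_mem a (hu.1 x), fun x y ↦ by simp [hu.2, smul_add]⟩

variable {π : L →ₗ⁅K⁆ S} {τ : S →ₗ⁅K⁆ L} {u : S →ₗ[K] L}

lemma exists_lieHom_eq_sub [IsLieAbelian π.ker] (hτ : Function.RightInverse τ π)
    (hu : u ∈ kerOneCocycle π τ) :
    ∃ τ' : S →ₗ⁅K⁆ L, τ' = (τ : S →ₗ[K] L) - u ∧ Function.RightInverse τ' π := by
  refine ⟨{ (τ : S →ₗ[K] L) - u with map_lie' {x y} := ?_ }, rfl, fun x ↦ ?_⟩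
  · change τ ⁅x, y⁆ - u ⁅x, y⁆ = ⁅τ x - u x, τ y - u y⁆
    rw [sub_lie, lie_sub, lie_sub, lie_eq_zero_of_mem_ker (hu.1 x) (hu.1 y), hu.2, LieHom.map_lie]
    abel
  · change π (τ x - u x) = x
    rw [map_sub, hτ x, LieHom.mem_ker.mp (hu.1 x), sub_zero]

variable {D : LieDerivation K L L} {E : LieDerivation K S S} (hDE : ∀ x, π (D x) = E (π x))
include hDE

lemma intertwiningDefect_mem_kerOneCocycle (hτ : Function.RightInverse τ π) :
    intertwiningDefect E.toLinearMap D.toLinearMap (τ : S →ₗ[K] L) ∈ kerOneCocycle π τ := by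
  refine ⟨fun x ↦ ?_, fun x y ↦ ?_⟩
  · change π (D (τ x) - τ (E x)) = 0
    rw [map_sub, hDE, hτ, hτ, sub_self]
  · change D (τ ⁅x, y⁆) - τ (E ⁅x, y⁆) = ⁅D (τ x) - τ (E x), τ y⁆ + ⁅τ x, D (τ y) - τ (E y)⁆
    simp only [LieHom.map_lie, LieDerivation.apply_lie_eq_add, map_add, sub_lie, lie_sub]
    abel

lemma intertwiningDefect_mem_kerOneCocycle_of_mem [IsLieAbelian π.ker]
    (hτ : Function.RightInverse τ π) (hu : u ∈ kerOneCocycle π τ) :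
    intertwiningDefect E.toLinearMap D.toLinearMap u ∈ kerOneCocycle π τ := by
  have mem_ker (x : S) : D (τ x) - τ (E x) ∈ π.ker :=
    (intertwiningDefect_mem_kerOneCocycle hDE hτ).1 x
  refine ⟨fun x ↦ ?_, fun x y ↦ ?_⟩
  · change π (D (u x) - u (E x)) = 0
    rw [map_sub, hDE, LieHom.mem_ker.mp (hu.1 _), LieHom.mem_ker.mp (hu.1 _), map_zero, sub_zero]
  · change D (u ⁅x, y⁆) - u (E ⁅x, y⁆) = ⁅D (u x) - u (E x), τ y⁆ + ⁅τ x, D (u y) - u (E y)⁆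
    have left := lie_eq_zero_of_mem_ker (mem_ker x) (hu.1 y)
    have right := lie_eq_zero_of_mem_ker (hu.1 x) (mem_ker y)
    simp only [sub_lie, lie_sub] at left right
    simp only [hu.2, LieDerivation.apply_lie_eq_add, map_add, sub_lie, lie_sub]
    linear_combination (norm := abel) left + right

end CrossedHoms

lemma exists_lieHom_rightInverse_comm {K L S : Type*} [Field K] [CharZero K] [LieRing L]
    [LieAlgebra K L] [FiniteDimensional K L] [LieRing S] [LieAlgebra K S] [LieAlgebra.IsKilling K S]
    {π : L →ₗ⁅K⁆ S} (hπ : Function.Surjective π) [IsLieAbelian π.ker] {D : LieDerivation K L L}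
    {E : LieDerivation K S S} (hD : Module.End.IsSemisimple D.toLinearMap)
    (hDE : ∀ x, π (D x) = E (π x)) :
    ∃ τ : S →ₗ⁅K⁆ L, Function.RightInverse τ π ∧ ∀ s, D (τ s) = τ (E s) := by
  have : FiniteDimensional K S := Module.Finite.of_surjective (π : L →ₗ[K] S) hπ
  have hE : Module.End.IsSemisimple E.toLinearMap :=
    isSemisimple_of_surjective (p := π) hπ hDE hD
  obtain ⟨τ, hτ⟩ := exists_lieHom_rightInverse_of_isLieAbelian_ker hπ
  obtain ⟨u, hu, eq_zero⟩ := exists_mem_apply_sub_eq_zero (isSemisimple_intertwiningDefect hE hD)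
    (Z := kerOneCocycle π τ) (fun _ ↦ intertwiningDefect_mem_kerOneCocycle_of_mem hDE hτ)
    (intertwiningDefect_mem_kerOneCocycle hDE hτ)
  obtain ⟨τ', hτ', section_τ'⟩ := exists_lieHom_eq_sub hτ hu
  refine ⟨τ', section_τ', fun s ↦ ?_⟩
  rw [← hτ'] at eq_zero
  exact sub_eq_zero.mp congr($eq_zero s)

section Quotients

variable {R L S : Type*} [CommRing R] [LieRing L] [LieAlgebra R L] [LieRing S] [LieAlgebra R S]

/-- The quotient map `L → L ⧸ I` by an ideal, as a homomorphism of Lie algebras. -/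
def quotientHom (I : LieIdeal R L) : L →ₗ⁅R⁆ L ⧸ I :=
  { I.toSubmodule.mkQ with map_lie' {x y} := LieSubmodule.Quotient.mk_bracket I x y }

lemma quotientHom_surjective (I : LieIdeal R L) : Function.Surjective (quotientHom I) :=
  I.toSubmodule.mkQ_surjective

lemma quotientHom_eq_zero {I : LieIdeal R L} {x : L} : quotientHom I x = 0 ↔ x ∈ I :=
  Submodule.Quotient.mk_eq_zero I.toSubmodule

lemma quotientHom_ker (I : LieIdeal R L) : (quotientHom I).ker = I := by
  ext x
  exact quotientHom_eq_zero

/-- The homomorphism `L ⧸ I → S` through which a homomorphism `L → S` vanishing on the ideal `I`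
factors. -/
def quotientLift {I : LieIdeal R L} {π : L →ₗ⁅R⁆ S} (hI : I ≤ π.ker) : L ⧸ I →ₗ⁅R⁆ S :=
  { I.toSubmodule.liftQ (π : L →ₗ[R] S) hI with
    map_lie' {x y} := by
      obtain ⟨x, rfl⟩ := quotientHom_surjective I x
      obtain ⟨y, rfl⟩ := quotientHom_surjective I y
      exact π.map_lie x y }

/-- The derivation of `L ⧸ I` induced by a derivation of `L` preserving the ideal `I`. -/
def quotientDerivation {I : LieIdeal R L} {D : LieDerivation R L L} (hI : ∀ x ∈ I, D x ∈ I) :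
    LieDerivation R (L ⧸ I) (L ⧸ I) where
  __ := I.toSubmodule.mapQ I.toSubmodule D.toLinearMap hI
  leibniz' x y := by
    obtain ⟨x, rfl⟩ := quotientHom_surjective I x
    obtain ⟨y, rfl⟩ := quotientHom_surjective I y
    exact congr(quotientHom I $(D.apply_lie_eq_sub x y))

/-- The derivation of a Lie subalgebra `h` induced by a derivation preserving `h`. -/
def restrictDerivation {h : LieSubalgebra R L} {D : LieDerivation R L L} (hD : ∀ x ∈ h, D x ∈ h) :
    LieDerivation R h h where
  __ := D.toLinearMap.restrict (p := h.toSubmodule) (q := h.toSubmodule) hD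
  leibniz' x y := Subtype.ext (D.apply_lie_eq_sub x y)

lemma mem_lie_of_forall_mem {D : LieDerivation R L L} {I J : LieIdeal R L}
    (hI : ∀ x ∈ I, D x ∈ I) (hJ : ∀ x ∈ J, D x ∈ J) {x : L} (hx : x ∈ ⁅I, J⁆) : D x ∈ ⁅I, J⁆ := by
  rw [← LieSubmodule.mem_toSubmodule, LieSubmodule.lieIdeal_oper_eq_linear_span'] at hx
  induction hx using Submodule.span_induction with
  | mem _ h =>
    obtain ⟨a, ha, b, hb, rfl⟩ := h
    rw [LieDerivation.apply_lie_eq_add]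
    exact add_mem (LieSubmodule.lie_mem_lie ha (hJ b hb)) (LieSubmodule.lie_mem_lie (hI a ha) hb)
  | zero => simp
  | add x y _ _ hx hy => simpa using add_mem hx hy
  | smul c x _ hx => simpa using ⁅I, J⁆.smul_mem c hx

instance isLieAbelian_ker_quotientLift (π : L →ₗ⁅R⁆ S) :
    IsLieAbelian (quotientLift (LieSubmodule.lie_le_right π.ker π.ker)).ker where
  trivial := by
    rintro ⟨a, ha⟩ ⟨b, hb⟩
    obtain ⟨x, rfl⟩ := quotientHom_surjective _ a
    obtain ⟨y, rfl⟩ := quotientHom_surjective _ b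
    exact Subtype.ext (((quotientHom _).map_lie x y).symm.trans
      (quotientHom_eq_zero.mpr (LieSubmodule.lie_mem_lie ha hb)))

end Quotients

variable {K L S : Type*} [Field K] [CharZero K] [LieRing L] [LieAlgebra K L] [FiniteDimensional K L]
  [LieRing S] [LieAlgebra K S] [LieAlgebra.IsKilling K S]

lemma exists_lieSubalgebra_mem_lie_ker {π : L →ₗ⁅K⁆ S} (hπ : Function.Surjective π)
    {D : LieDerivation K L L} {E : LieDerivation K S S}
    (hD : Module.End.IsSemisimple D.toLinearMap) (hDE : ∀ x, π (D x) = E (π x)) :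
    ∃ h : LieSubalgebra K L, (∀ x ∈ h, D x ∈ h) ∧ (∀ s, ∃ x ∈ h, π x = s) ∧
      ∀ x ∈ h, π x = 0 → x ∈ ⁅π.ker, π.ker⁆ := by
  let I : LieIdeal K L := ⁅π.ker, π.ker⁆
  have : FiniteDimensional K (L ⧸ I) := inferInstanceAs (FiniteDimensional K (L ⧸ I.toSubmodule))
  have ker_invariant (x : L) (hx : x ∈ π.ker) : D x ∈ π.ker := by
    rw [LieHom.mem_ker, hDE, LieHom.mem_ker.mp hx, map_zero]
  let q := quotientHom I
  have q_surjective : Function.Surjective q := quotientHom_surjective I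
  let D' : LieDerivation K (L ⧸ I) (L ⧸ I) := quotientDerivation (I := I) (D := D)
    fun x ↦ mem_lie_of_forall_mem ker_invariant ker_invariant
  have q_comm (x : L) : q (D x) = D' (q x) := rfl
  let ρ : L ⧸ I →ₗ⁅K⁆ S := quotientLift (LieSubmodule.lie_le_right π.ker π.ker)
  have ρ_q (x : L) : ρ (q x) = π x := rfl
  obtain ⟨τ, hτ, τ_comm⟩ := exists_lieHom_rightInverse_comm (π := ρ)
    (fun s ↦ (hπ s).imp' q fun _ hx ↦ hx)
    (isSemisimple_of_surjective (p := q) q_surjective q_comm hD : Module.End.IsSemisimple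
      D'.toLinearMap) (E := E) fun y ↦ by obtain ⟨x, rfl⟩ := q_surjective y; exact hDE x
  refine ⟨τ.range.comap q, ?_, fun s ↦ ?_, ?_⟩
  · rintro x ⟨s, hs⟩
    exact ⟨E s, (τ_comm s).symm.trans congr(D' $hs)⟩
  · obtain ⟨x, hx⟩ := q_surjective (τ s)
    exact ⟨x, ⟨s, hx.symm⟩, by rw [← ρ_q, hx, hτ]⟩
  · rintro x ⟨s, hs : τ s = q x⟩ hx
    have : s = 0 := by rw [← hτ s, hs, ρ_q, hx]
    rw [← quotientHom_eq_zero]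
    exact hs.symm.trans (by rw [this, map_zero])

lemma exists_lieSubalgebra_mem_derivedSeriesOfIdeal {π : L →ₗ⁅K⁆ S} (hπ : Function.Surjective π)
    {D : LieDerivation K L L} {E : LieDerivation K S S}
    (hD : Module.End.IsSemisimple D.toLinearMap) (hDE : ∀ x, π (D x) = E (π x)) (k : ℕ) :
    ∃ h : LieSubalgebra K L, (∀ x ∈ h, D x ∈ h) ∧ (∀ s, ∃ x ∈ h, π x = s) ∧
      ∀ x ∈ h, π x = 0 → x ∈ LieAlgebra.derivedSeriesOfIdeal K L k π.ker := by
  induction k with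
  | zero => exact ⟨⊤, by simp, fun s ↦ by simpa using hπ s, by simp⟩
  | succ k ih =>
    obtain ⟨h, h_invariant, h_surjective, h_ker⟩ := ih
    let π' : h →ₗ⁅K⁆ S := π.comp h.incl
    obtain ⟨h', h'_invariant, h'_surjective, h'_ker⟩ := exists_lieSubalgebra_mem_lie_ker (π := π')
      (fun s ↦ let ⟨x, hx, hxs⟩ := h_surjective s; ⟨⟨x, hx⟩, hxs⟩)
      (D := restrictDerivation h_invariant) (E := E) (hD.restrict h_invariant) fun x ↦ hDE x
    let N := LieAlgebra.derivedSeriesOfIdeal K L k π.ker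
    have ker_le : π'.ker ≤ N.comap h.incl := fun x hx ↦ h_ker x x.2 hx
    refine ⟨h'.map h.incl, ?_, fun s ↦ ?_, ?_⟩
    · rintro _ ⟨x, hx, rfl⟩
      exact ⟨_, h'_invariant x hx, rfl⟩
    · obtain ⟨x, hx, rfl⟩ := h'_surjective s
      exact ⟨x, ⟨x, hx, rfl⟩, rfl⟩
    · rintro _ ⟨x, hx, rfl⟩ hπx
      rw [LieAlgebra.derivedSeriesOfIdeal_succ]
      exact LieIdeal.comap_bracket_le h.incl (LieSubmodule.mono_lie ker_le ker_le (h'_ker x hx hπx))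

theorem exists_invariant_levi_complement_ker {π : L →ₗ⁅K⁆ S} (hπ : Function.Surjective π)
    [LieAlgebra.IsSolvable π.ker] {D : LieDerivation K L L} {E : LieDerivation K S S}
    (hD : Module.End.IsSemisimple D.toLinearMap) (hDE : ∀ x, π (D x) = E (π x)) :
    ∃ s : LieSubalgebra K L, LieAlgebra.IsSemisimple K s ∧
      IsCompl π.ker.toSubmodule s.toSubmodule ∧ ∀ x ∈ s, D x ∈ s := by
  obtain ⟨k, hk⟩ := LieAlgebra.IsSolvable.solvable K π.ker
  rw [LieIdeal.derivedSeries_eq_bot_iff] at hk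
  obtain ⟨h, h_invariant, h_surjective, h_ker⟩ :=
    exists_lieSubalgebra_mem_derivedSeriesOfIdeal hπ hD hDE k
  rw [hk] at h_ker
  have eq_zero (x : L) (hx : x ∈ h) (hπx : π x = 0) : x = 0 := by simpa using h_ker x hx hπx
  have bijective : Function.Bijective (π.comp h.incl) :=
    ⟨(injective_iff_map_eq_zero _).mpr fun x hx ↦ Subtype.ext (eq_zero x x.2 hx),
      fun s ↦ let ⟨x, hx, hxs⟩ := h_surjective s; ⟨⟨x, hx⟩, hxs⟩⟩
  have : LieAlgebra.IsKilling K h :=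
    (LieEquiv.ofBijective _ bijective).symm.isKilling
  refine ⟨h, inferInstance, ⟨?_, ?_⟩, h_invariant⟩
  · exact Submodule.disjoint_def.mpr fun x hπx hx ↦ eq_zero x hx hπx
  · refine codisjoint_iff.mpr (eq_top_iff.mpr fun x _ ↦ ?_)
    obtain ⟨y, hy, hyx⟩ := h_surjective (π x)
    refine Submodule.mem_sup.mpr ⟨x - y, ?_, y, hy, sub_add_cancel x y⟩
    exact LieHom.mem_ker.mpr (by rw [map_sub, hyx, sub_self])

section Radical

lemma le_radical_of_lie_le_radical {R L : Type*} [CommRing R] [LieRing L] [LieAlgebra R L]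
    [IsNoetherian R L] {I : LieIdeal R L} (hI : ⁅I, I⁆ ≤ LieAlgebra.radical R L) :
    I ≤ LieAlgebra.radical R L := by
  rw [← LieAlgebra.LieIdeal.solvable_iff_le_radical] at hI ⊢
  obtain ⟨k, hk⟩ := LieAlgebra.IsSolvable.solvable R (⁅I, I⁆ : LieIdeal R L)
  rw [LieIdeal.derivedSeries_eq_bot_iff] at hk
  refine LieAlgebra.IsSolvable.mk (R := R) (k := k + 1) ?_
  rw [LieIdeal.derivedSeries_eq_bot_iff, LieAlgebra.derivedSeriesOfIdeal_add]
  exact hk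

lemma hasTrivialRadical_quotient_radical (R L : Type*) [CommRing R] [LieRing L] [LieAlgebra R L]
    [IsNoetherian R L] : LieAlgebra.HasTrivialRadical R (L ⧸ LieAlgebra.radical R L) := by
  let q := quotientHom (LieAlgebra.radical R L)
  refine (LieAlgebra.hasTrivialRadical_iff_no_abelian_ideals R _).mpr fun J hJ ↦ ?_
  have lie_le : ⁅J.comap q, J.comap q⁆ ≤ LieAlgebra.radical R L := by
    refine (LieSubmodule.lie_le_iff ..).mpr fun x hx y hy ↦ quotientHom_eq_zero.mp ?_
    exact (q.map_lie x y).trans congr($(trivial_lie_zero J J ⟨q x, hx⟩ ⟨q y, hy⟩).val)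
  refine (LieSubmodule.eq_bot_iff J).mpr fun y hy ↦ ?_
  obtain ⟨x, rfl⟩ := quotientHom_surjective _ y
  exact quotientHom_eq_zero.mpr (le_radical_of_lie_le_radical lie_le hy)

section Leibniz

variable {R L : Type*} [CommRing R] [LieRing L] [LieAlgebra R L] {I J : LieIdeal R L}
  {D : LieDerivation R L L} {n : ℕ} (hD : ∀ m < n, ∀ x ∈ I, D^[m] x ∈ J)
include hD

lemma lie_iterate_sub_mem (z : L) {x : L} (hx : x ∈ I) : ⁅z, D^[n] x⁆ - D^[n] ⁅z, x⁆ ∈ J := by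
  rw [LieDerivation.iterate_apply_lie,
    ← Finset.add_sum_erase _ _ (a := (0, n)) (by simp), Nat.choose_zero_right, one_smul,
    Function.iterate_zero_apply, sub_add_cancel_left]
  refine J.neg_mem (sum_mem fun ij hij ↦ nsmul_mem (lie_mem_right R L J _ _ (hD _ ?_ _ hx)) _)
  obtain ⟨ne, mem⟩ := Finset.mem_erase.mp hij
  rw [Finset.HasAntidiagonal.mem_antidiagonal] at mem
  by_contra!
  exact ne (Prod.ext (by grind) (by grind))

lemma choose_smul_lie_iterate_sub_mem {x y : L} (hx : x ∈ I) (hy : y ∈ I) :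
    D^[n + n] ⁅x, y⁆ - (n + n).choose n • ⁅D^[n] x, D^[n] y⁆ ∈ J := by
  rw [LieDerivation.iterate_apply_lie,
    ← Finset.add_sum_erase _ _ (a := (n, n)) (by simp), add_sub_cancel_left]
  refine sum_mem fun ij hij ↦ nsmul_mem ?_ _
  obtain ⟨ne, mem⟩ := Finset.mem_erase.mp hij
  rw [Finset.HasAntidiagonal.mem_antidiagonal] at mem
  rcases lt_trichotomy ij.1 n with lt | eq | gt
  · exact lie_mem_left R L J _ _ (hD _ lt _ hx)
  · exact absurd (Prod.ext eq (by grind)) ne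
  · exact lie_mem_right R L J _ _ (hD _ (by grind) _ hy)

/-- The ideal `D ^ n I + J`, where `J` contains `D ^ m I` for all `m < n`. -/
def iterateSupIdeal : LieIdeal R L where
  __ := I.toSubmodule.map (D.toLinearMap ^ n) ⊔ J.toSubmodule
  lie_mem {z w} hw := by
    obtain ⟨_, ⟨x, hx, rfl⟩, y, hy, rfl⟩ := Submodule.mem_sup.mp hw
    refine Submodule.mem_sup.mpr ⟨_, ⟨⁅z, x⁆, lie_mem_right R L I z x hx, rfl⟩,
      ⁅z, (D.toLinearMap ^ n) x⁆ - (D.toLinearMap ^ n) ⁅z, x⁆ + ⁅z, y⁆, ?_, ?_⟩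
    · refine J.add_mem ?_ (lie_mem_right R L J z y hy)
      simpa [Module.End.pow_apply] using lie_iterate_sub_mem hD z hx
    · rw [lie_add]
      abel

end Leibniz

variable {K L : Type*} [Field K] [CharZero K] [LieRing L] [LieAlgebra K L]
  {D : LieDerivation K L L}

lemma lie_iterateSupIdeal_le {I J : LieIdeal K L} {n : ℕ} (hD : ∀ m < n, ∀ x ∈ I, D^[m] x ∈ J)
    (hI : ∀ z ∈ ⁅I, I⁆, D^[n + n] z ∈ J) : ⁅iterateSupIdeal hD, iterateSupIdeal hD⁆ ≤ J := by
  have lie_iterate_mem {x y : L} (hx : x ∈ I) (hy : y ∈ I) : ⁅D^[n] x, D^[n] y⁆ ∈ J := by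
    have smul_mem := J.sub_mem (hI _ (LieSubmodule.lie_mem_lie hx hy))
      (choose_smul_lie_iterate_sub_mem hD hx hy)
    rw [sub_sub_cancel, ← Nat.cast_smul_eq_nsmul K] at smul_mem
    have ne_zero : ((n + n).choose n : K) ≠ 0 :=
      Nat.cast_ne_zero.mpr (Nat.choose_pos (Nat.le_add_right n n)).ne'
    exact (J.toSubmodule.smul_mem_iff ne_zero).mp smul_mem
  refine (LieSubmodule.lie_le_iff ..).mpr fun a ha b hb ↦ ?_
  obtain ⟨_, ⟨x, hx, rfl⟩, r, hr, rfl⟩ := Submodule.mem_sup.mp ha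
  obtain ⟨_, ⟨y, hy, rfl⟩, s, hs, rfl⟩ := Submodule.mem_sup.mp hb
  rw [Module.End.pow_apply, Module.End.pow_apply, lie_add, add_lie]
  refine J.add_mem (J.add_mem ?_ (lie_mem_left K L J _ _ hr)) (lie_mem_right K L J _ _ hs)
  exact lie_iterate_mem hx hy

variable [FiniteDimensional K L]

lemma iterate_mem_radical {I : LieIdeal K L}
    (hI : ∀ n, ∀ z ∈ ⁅I, I⁆, D^[n] z ∈ LieAlgebra.radical K L) (n : ℕ) :
    ∀ x ∈ I, D^[n] x ∈ LieAlgebra.radical K L := by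
  induction n using Nat.strong_induction_on with
  | h n ih =>
    intro x hx
    refine le_radical_of_lie_le_radical (lie_iterateSupIdeal_le ih (hI (n + n))) ?_
    refine Submodule.mem_sup_left ⟨x, hx, ?_⟩
    rw [Module.End.pow_apply]
    rfl

lemma apply_mem_radical (D : LieDerivation K L L) {x : L} (hx : x ∈ LieAlgebra.radical K L) :
    D x ∈ LieAlgebra.radical K L := by
  let R := LieAlgebra.radical K L
  obtain ⟨k, hk⟩ := LieAlgebra.IsSolvable.solvable K R
  rw [LieIdeal.derivedSeries_eq_bot_iff] at hk
  suffices ∀ n, ∀ x ∈ LieAlgebra.derivedSeriesOfIdeal K L 0 R, D^[n] x ∈ R from this 1 x hx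
  refine Nat.decreasingInduction
    (motive := fun j _ ↦ ∀ n, ∀ x ∈ LieAlgebra.derivedSeriesOfIdeal K L j R, D^[n] x ∈ R)
    (fun _ _ ih ↦ iterate_mem_radical (by rwa [← LieAlgebra.derivedSeriesOfIdeal_succ])) ?_
    (Nat.zero_le k)
  rw [hk]
  rintro n x rfl
  rw [iterate_map_zero]
  exact R.zero_mem

end Radical

lemma isSemisimple_of_sup_eigenspace_eq_top {K V : Type*} [Field K] [AddCommGroup V] [Module K V]
    {T : Module.End K V} {Λ : Finset K} (hT : Λ.sup T.eigenspace = ⊤) : T.IsSemisimple := by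
  let p : Polynomial K := ∏ μ ∈ Λ, (Polynomial.X - Polynomial.C μ)
  have squarefree : Squarefree p :=
    (Polynomial.separable_prod_X_sub_C_iff' (f := id)).mpr (fun _ _ _ _ h ↦ h) |>.squarefree
  refine Module.End.isSemisimple_of_squarefree_aeval_eq_zero squarefree
    (LinearMap.ker_eq_top.mp (eq_top_iff.mpr (hT.ge.trans (Finset.sup_le fun μ hμ v hv ↦ ?_))))
  have root : p.eval μ = 0 := by
    rw [Polynomial.eval_prod]
    exact Finset.prod_eq_zero hμ (by simp)
  have apply_eq := Module.End.mem_eigenspace_iff.mp hv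
  rw [LinearMap.mem_ker, Module.End.aeval_apply_of_mem_apply_eq_smul apply_eq, root, zero_smul]

end LeviDecomposition

open LeviDecomposition in
theorem exists_D_invariant_levi_complement_general {K : Type*} [Field K] [CharZero K]
    (g : Type*) [LieRing g] [LieAlgebra K g] [FiniteDimensional K g] (D : LieDerivation K g g)
    (hD : Module.End.IsSemisimple D.toLinearMap) :
    ∃ s : LieSubalgebra K g, LieAlgebra.IsSemisimple K s ∧
      IsCompl (LieAlgebra.radical K g).toSubmodule s.toSubmodule ∧
      ∀ x ∈ s, D x ∈ s := by
  let R := LieAlgebra.radical K g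
  have : FiniteDimensional K (g ⧸ R) := inferInstanceAs (FiniteDimensional K (g ⧸ R.toSubmodule))
  have := hasTrivialRadical_quotient_radical K g
  have ker_eq := quotientHom_ker R
  have : LieAlgebra.IsSolvable (quotientHom R).ker := by
    rw [ker_eq]
    exact LieAlgebra.radicalIsSolvable K g
  have := exists_invariant_levi_complement_ker (quotientHom_surjective R) hD
    (E := quotientDerivation fun _ ↦ apply_mem_radical D) fun _ ↦ rfl
  rwa [ker_eq] at this

/-- If `D` is a derivation of a finite-dimensional real Lie algebra `𝔤`
such that `𝔤 = 𝔤₋₁(D) ⊕ 𝔤₀(D) ⊕ 𝔤₁(D)` (direct sum of eigenspaces; the independence of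
eigenspaces is automatic, so we require that their supremum is everything), then there is a
`D`-invariant Levi complement: a semisimple subalgebra complementing the solvable radical. -/
theorem exists_D_invariant_levi_complement
    (g : Type*) [LieRing g] [LieAlgebra ℝ g] [FiniteDimensional ℝ g]
    (D : LieDerivation ℝ g g)
    (hgrad : Module.End.eigenspace (D.toLinearMap : Module.End ℝ g) (-1) ⊔
        Module.End.eigenspace (D.toLinearMap : Module.End ℝ g) 0 ⊔
        Module.End.eigenspace (D.toLinearMap : Module.End ℝ g) 1 = ⊤) :
    ∃ s : LieSubalgebra ℝ g, LieAlgebra.IsSemisimple ℝ s ∧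
      IsCompl (LieAlgebra.radical ℝ g).toSubmodule s.toSubmodule ∧
      ∀ x ∈ s, D x ∈ s :=
  exists_D_invariant_levi_complement_general g D <|
    LeviDecomposition.isSemisimple_of_sup_eigenspace_eq_top (Λ := {-1, 0, 1})
      (by simpa [sup_assoc] using hgrad)
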